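/- arXiv:math/0504600 — 2 statements merged into one kernel-verified Lean document; each statement's English description precedes it below -/
import Mathlib

section
/- Suppose c = 1/2 + m with m ∈ ℤ_{≥0}. Then the subspace X^{2m+1}·ℂ[X] is stable under the operators x, s and T; it is the unique ℂ-linear subspace of ℂ[X] stable under x, s and T other than 0 and ℂ[X]; and the quotient module ℂ[X]/(X^{2m+1}·ℂ[X]), of dimension 2m+1, is irreducible (it is the simple module L(ℂ)). -/
/-!
The operators `s` and `T` act diagonally on monomials up to a shift: `s X^k = (-1)^k X^k` and
`T X^(k+1) = a_k X^k` with `a_k = k + 1` for odd `k` and `a_k = k + 1 - 2c = k - 2m` for even `k`.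
Hence `a_k = 0` exactly when `k = 2m`, which makes `X^(2m+1) ℂ[X]` stable.

A stable subspace `M` is an ideal. If `M ≠ 0`, a nonzero `f ∈ M` of least degree is killed by `T`,
so `f = α + β X^(2m+1)`. If `β = 0`, then `M` contains a nonzero constant and is everything.
Otherwise `f - s f = 2β X^(2m+1)` lies in `M`, and the least degree is `2m+1`, so the remainder of
any element of `M` modulo `X^(2m+1)` is zero and `M = X^(2m+1) ℂ[X]` (`stable_classification`).
Irreducibility of the quotient is a special case of this classification.
-/

open Polynomial

/-- The involution `s` of `ℂ[X]` determined by `X ↦ -X`. -/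
noncomputable def cherednikS (f : Polynomial ℂ) : Polynomial ℂ := f.comp (-X)

/-- The one-variable Dunkl operator `T f = f' + c g`, where `g` is the unique
polynomial with `X g = s(f) - f`. -/
noncomputable def cherednikT (c : ℂ) (f : Polynomial ℂ) : Polynomial ℂ :=
  derivative f + C c * ((cherednikS f - f) /ₘ X)

/-- A ℂ-subspace of `ℂ[X]` is a submodule for `H_{1,c}` when it is stable under
multiplication by `X`, under `s` and under the Dunkl operator `T`. -/
def IsCherednikStable (c : ℂ) (M : Submodule ℂ (Polynomial ℂ)) : Prop :=
  (∀ f ∈ M, X * f ∈ M) ∧ (∀ f ∈ M, cherednikS f ∈ M) ∧ (∀ f ∈ M, cherednikT c f ∈ M)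

/-- The subspace `X^(2m+1) ℂ[X]` of `ℂ[X]`, as a ℂ-submodule. -/
noncomputable def radicalSubmodule (m : ℕ) : Submodule ℂ (Polynomial ℂ) :=
  Submodule.restrictScalars ℂ (Ideal.span {X ^ (2 * m + 1)} : Ideal (Polynomial ℂ))

/-- Reflection scales the `k`-th coefficient by `(-1)^k`. -/
lemma coeff_cherednikS (f : Polynomial ℂ) (k : ℕ) :
    (cherednikS f).coeff k = (-1) ^ k * f.coeff k := by
  have h : (-X : Polynomial ℂ) = C (-1) * X := by simp
  rw [cherednikS, h, comp_C_mul_X_coeff, mul_comm]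

/-- The Dunkl operator sends `X^(k+1)` to a multiple of `X^k`; on coefficients
this is a weighted shift. -/
lemma coeff_cherednikT (c : ℂ) (f : Polynomial ℂ) (k : ℕ) :
    (cherednikT c f).coeff k =
      ((k : ℂ) + 1 + c * ((-1) ^ (k + 1) - 1)) * f.coeff (k + 1) := by
  have hX : X ∣ cherednikS f - f := by
    rw [X_dvd_iff, coeff_sub, coeff_cherednikS]
    simp
  obtain ⟨g, hg⟩ := hX
  have hgk : g.coeff k = (cherednikS f - f).coeff (k + 1) := by
    rw [hg, coeff_X_mul]
  rw [cherednikT, hg, mul_divByMonic_cancel_left g monic_X, coeff_add, coeff_C_mul, hgk,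
    coeff_derivative, coeff_sub, coeff_cherednikS]
  ring

/-- For `c = 1/2 + m` the factor `k + 1 + c((-1)^(k+1) - 1)` is `k + 1` for odd `k` and
`k - 2m` for even `k`, so it vanishes exactly at `k = 2m`. -/
lemma dunkl_factor_eq_zero_iff (m k : ℕ) :
    (k : ℂ) + 1 + (1 / 2 + (m : ℂ)) * ((-1) ^ (k + 1) - 1) = 0 ↔ k = 2 * m := by
  rcases Nat.even_or_odd k with hk | hk
  · rw [hk.add_one.neg_one_pow]
    constructor
    · intro h
      have h' : (k : ℂ) = ((2 * m : ℕ) : ℂ) := by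
        push_cast
        linear_combination h
      exact_mod_cast h'
    · rintro rfl
      push_cast
      ring
  · rw [hk.add_one.neg_one_pow]
    constructor
    · intro h
      have h' : ((k + 1 : ℕ) : ℂ) = 0 := by
        push_cast
        linear_combination h
      have : k + 1 = 0 := by exact_mod_cast h'
      omega
    · rintro rfl
      exact absurd hk (by simp)

lemma mem_radicalSubmodule_iff (m : ℕ) (f : Polynomial ℂ) :
    f ∈ radicalSubmodule m ↔ X ^ (2 * m + 1) ∣ f := by
  rw [radicalSubmodule, Submodule.restrictScalars_mem, Ideal.mem_span_singleton]

lemma isCherednikStable_radicalSubmodule (m : ℕ) :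
    IsCherednikStable (1 / 2 + (m : ℂ)) (radicalSubmodule m) := by
  simp only [IsCherednikStable, mem_radicalSubmodule_iff]
  refine ⟨fun f hf => hf.mul_left X, fun f hf => ?_, fun f hf => ?_⟩
  · rw [X_pow_dvd_iff] at hf ⊢
    intro d hd
    rw [coeff_cherednikS, hf d hd, mul_zero]
  · rw [X_pow_dvd_iff] at hf ⊢
    intro d hd
    rw [coeff_cherednikT]
    -- The top coefficient `d = 2m` is the one where divisibility of `f` gives nothing.
    rcases eq_or_ne d (2 * m) with h | h
    · rw [(dunkl_factor_eq_zero_iff m d).2 h, zero_mul]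
    · rw [hf (d + 1) (by omega), mul_zero]

/-- A subspace closed under multiplication by `X` is an ideal. -/
lemma IsCherednikStable.mul_mem {c : ℂ} {M : Submodule ℂ (Polynomial ℂ)}
    (hM : IsCherednikStable c M) {f : Polynomial ℂ} (hf : f ∈ M) (p : Polynomial ℂ) :
    p * f ∈ M := by
  induction p using Polynomial.induction_on' with
  | add p q hp hq =>
    rw [add_mul]
    exact M.add_mem hp hq
  | monomial n a =>
    rw [← C_mul_X_pow_eq_monomial, mul_assoc, ← smul_eq_C_mul]
    refine M.smul_mem a ?_
    induction n with
    | zero => simpa using hf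
    | succ n ih =>
      rw [pow_succ', mul_assoc]
      exact hM.1 _ ih

/-- A nonzero element of least degree in a stable subspace is killed by `T`, which lowers
degrees. -/
lemma cherednikT_eq_zero_of_minimal {c : ℂ} {M : Submodule ℂ (Polynomial ℂ)}
    (hM : IsCherednikStable c M) {f : Polynomial ℂ} (hf : f ∈ M)
    (hmin : ∀ g ∈ M, g ≠ 0 → f.natDegree ≤ g.natDegree) : cherednikT c f = 0 := by
  by_contra hT
  have hle := hmin _ (hM.2.2 f hf) hT
  have hlead : (cherednikT c f).coeff (cherednikT c f).natDegree = 0 := by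
    rw [coeff_cherednikT, coeff_eq_zero_of_natDegree_lt (by omega), mul_zero]
  exact hT (leadingCoeff_eq_zero.1 hlead)

lemma stable_classification (m : ℕ) (M : Submodule ℂ (Polynomial ℂ))
    (hM : IsCherednikStable (1 / 2 + (m : ℂ)) M) :
    M = ⊥ ∨ M = ⊤ ∨ M = radicalSubmodule m := by
  classical
  rw [or_iff_not_imp_left]
  intro hbot
  obtain ⟨f₀, hf₀, hf₀0⟩ := M.exists_mem_ne_zero_of_ne_bot hbot
  obtain ⟨f, ⟨hf, hf0⟩, hmin'⟩ := exists_minimalFor_of_wellFoundedLT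
    (fun g : Polynomial ℂ => g ∈ M ∧ g ≠ 0) natDegree ⟨f₀, hf₀, hf₀0⟩
  have hmin : ∀ g ∈ M, g ≠ 0 → f.natDegree ≤ g.natDegree := by
    intro g hg hg0
    rcases le_total f.natDegree g.natDegree with h | h
    · exact h
    · exact hmin' ⟨hg, hg0⟩ h
  have hT := cherednikT_eq_zero_of_minimal hM hf hmin
  have hcoeff : ∀ k, k ≠ 2 * m → f.coeff (k + 1) = 0 := by
    intro k hk
    have h := coeff_cherednikT (1 / 2 + (m : ℂ)) f k
    rw [hT, coeff_zero, eq_comm, mul_eq_zero, dunkl_factor_eq_zero_iff] at h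
    exact h.resolve_left hk
  by_cases hβ : f.coeff (2 * m + 1) = 0
  · left
    have hfC : f = C (f.coeff 0) := by
      ext k
      rcases k with _ | k
      · simp
      · rw [coeff_C_succ]
        by_cases hk : k = 2 * m
        · rw [hk, hβ]
        · exact hcoeff k hk
    have hα : f.coeff 0 ≠ 0 := by
      intro h
      rw [h, C_0] at hfC
      exact hf0 hfC
    rw [eq_top_iff]
    intro p _
    have h := hM.mul_mem hf (p * C (f.coeff 0)⁻¹)
    rwa [hfC, coeff_C_zero, mul_assoc, ← C_mul, inv_mul_cancel₀ hα, C_1, mul_one] at h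
  · right
    have hdeg : 2 * m + 1 ≤ f.natDegree := le_natDegree_of_ne_zero hβ
    -- `f = α + β X^(2m+1)`, and the odd part `f - s f` isolates the second summand.
    have hXM : (X : Polynomial ℂ) ^ (2 * m + 1) ∈ M := by
      have hsub : f - cherednikS f = (2 * f.coeff (2 * m + 1)) • X ^ (2 * m + 1) := by
        ext k
        rw [coeff_sub, coeff_cherednikS, coeff_smul, coeff_X_pow, smul_eq_mul]
        rcases k with _ | k
        · simp
        · by_cases hk : k = 2 * m
          · rw [hk, if_pos rfl, (odd_two_mul_add_one m).neg_one_pow]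
            ring
          · rw [hcoeff k hk, if_neg (by omega)]
            ring
      have h : (2 * f.coeff (2 * m + 1)) • (X : Polynomial ℂ) ^ (2 * m + 1) ∈ M :=
        hsub ▸ M.sub_mem hf (hM.2.1 f hf)
      exact (M.smul_mem_iff (mul_ne_zero two_ne_zero hβ)).1 h
    apply le_antisymm
    · intro g hg
      rw [mem_radicalSubmodule_iff, ← modByMonic_eq_zero_iff_dvd (monic_X_pow _)]
      by_contra hr
      have hrM : g %ₘ X ^ (2 * m + 1) ∈ M := by
        rw [modByMonic_eq_sub_mul_div, mul_comm]
        exact M.sub_mem hg (hM.mul_mem hXM _)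
      have h1 := hmin _ hrM hr
      have h2 := natDegree_modByMonic_lt g (monic_X_pow (R := ℂ) (2 * m + 1))
        (fun h => by simpa using congrArg natDegree h)
      rw [natDegree_X_pow] at h2
      omega
    · intro g hg
      rw [mem_radicalSubmodule_iff] at hg
      obtain ⟨p, rfl⟩ := hg
      rw [mul_comm]
      exact hM.mul_mem hXM p

lemma finrank_quotient_radicalSubmodule (m : ℕ) :
    Module.finrank ℂ (Polynomial ℂ ⧸ radicalSubmodule m) = 2 * m + 1 := by
  have h := finrank_quotient_span_eq_natDegree (K := ℂ) (f := X ^ (2 * m + 1))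
  rw [natDegree_X_pow] at h
  rw [← h]
  exact (Submodule.Quotient.restrictScalarsEquiv ℂ
    (Ideal.span {(X : Polynomial ℂ) ^ (2 * m + 1)})).finrank_eq

/-- For `c = 1/2 + m` with `m ∈ ℤ_{≥0}`: the subspace `X^(2m+1) ℂ[X]` is stable under
`x`, `s` and `T`; it is the unique nontrivial proper stable subspace; and the quotient
`ℂ[X]/(X^(2m+1))` has dimension `2m+1` and is irreducible (every stable subspace
containing it is itself or everything): it is the simple module `L(ℂ)`. -/
theorem radical_of_standard_module (c : ℂ) (m : ℕ) (hc : c = 1/2 + (m : ℂ)) :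
    IsCherednikStable c (radicalSubmodule m) ∧
    (∀ M : Submodule ℂ (Polynomial ℂ), IsCherednikStable c M →
      M = ⊥ ∨ M = ⊤ ∨ M = radicalSubmodule m) ∧
    Module.finrank ℂ (Polynomial ℂ ⧸ radicalSubmodule m) = 2 * m + 1 ∧
    (∀ M : Submodule ℂ (Polynomial ℂ), IsCherednikStable c M →
      radicalSubmodule m ≤ M → M = radicalSubmodule m ∨ M = ⊤) := by
  subst hc
  refine ⟨isCherednikStable_radicalSubmodule m, stable_classification m,
    finrank_quotient_radicalSubmodule m, fun M hM hle => ?_⟩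
  rcases stable_classification m M hM with h | h | h
  · exact Or.inl (le_antisymm (h ▸ bot_le) hle)
  · exact Or.inr h
  · exact Or.inl h
end

section
/- The images in H^{ell} of the monomials X^i·T^ε·Y^j, for i, j ∈ ℤ and ε ∈ {0, 1} (negative powers being interpreted via X⁻¹ and Y⁻¹), form an R-basis of H^{ell}; i.e. the double affine Hecke algebra of type A₁ admits the triangular decomposition H^{ell} = ℂ[X^{±1}] ⊗ H ⊗ ℂ[Y^{±1}], where H is the finite Hecke algebra spanned over R by 1 and T. -/
/-!
Put `c = τ - τ⁻¹` and `π = Y T⁻¹ = T Y⁻¹`. In terms of `X`, `T`, `π` the relations read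
`T² = c T + 1`, `T X = X⁻¹ (T - c)`, `π² = 1`, `π X⁻¹ = q X π`, and `Y = π T`.

*Spanning.* The span of the monomials `X^i T^ε Y^j` contains `1`. It is stable under left
multiplication by `X^{±1}`; by induction on `i`, the commutation rules of `T` and `π` with `X`
reduce stability under `T` and `π` to the case `i = 0`, where
`π Y^j = T Y^{j-1}` and `π T Y^j = Y^{j+1}`. Since `Y = π T` and `Y⁻¹ = (T - c) π`, the span is a
left ideal containing `1`.

*Independence.* Let `k = R[y^{±1}]`. The algebra acts `k`-linearly on pairs `(f, g)` of elements of
`k[x^{±1}]`, where `(x^i y^j, 0)` and `(0, x^i y^j)` stand for `X^i Y^j` and `X^i T Y^j`: this is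
left multiplication on the prospective basis. Here `X` is multiplication by `x`, `π (f, g) = (y σ g, y⁻¹ σ f)` with `σ : x ↦ q⁻¹ x⁻¹`, and
`T (f, g) = (D f + s g, D g + s f + c s g)` with `s : x ↦ x⁻¹` and the Demazure operator
`D f = c (s f - f) / (x² - 1)`. The only relation that is not immediate is the quadratic one
(`repT_mul_repT`): `T² - c T - 1` commutes with `X^{±1}` and kills `(1, 0)` and `(0, 1)`, hence is
zero. The monomial `X^i T^ε Y^j` maps `(1, 0)` to `x^i y^j` in the component `ε`
(`rep_monomial`), and these vectors are linearly independent over `R`.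
-/

open FreeAlgebra

/-- The coefficient ring `R = ℂ[τ^{±1}, q^{±1}]`, realized as Laurent polynomials in
`q` with coefficients Laurent polynomials in `τ`. -/
abbrev DahaR : Type := LaurentPolynomial (LaurentPolynomial ℂ)

/-- The parameter `τ ∈ R`. -/
noncomputable def dahaTau : DahaR := LaurentPolynomial.C (LaurentPolynomial.T 1)

/-- The parameter `τ⁻¹ ∈ R`. -/
noncomputable def dahaTauInv : DahaR := LaurentPolynomial.C (LaurentPolynomial.T (-1))

/-- The parameter `q ∈ R`. -/
noncomputable def dahaQ : DahaR := LaurentPolynomial.T 1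

/-- The parameter `q⁻¹ ∈ R`. -/
noncomputable def dahaQInv : DahaR := LaurentPolynomial.T (-1)

/-- The defining relations of the double affine Hecke algebra of type `A₁` on the
free `R`-algebra with generators `X = ι 0`, `X⁻¹ = ι 1`, `Y = ι 2`, `Y⁻¹ = ι 3`,
`T = ι 4`. -/
inductive DahaRel : FreeAlgebra DahaR (Fin 5) → FreeAlgebra DahaR (Fin 5) → Prop
  | X_Xinv : DahaRel (ι DahaR (0 : Fin 5) * ι DahaR (1 : Fin 5)) 1
  | Xinv_X : DahaRel (ι DahaR (1 : Fin 5) * ι DahaR (0 : Fin 5)) 1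
  | Y_Yinv : DahaRel (ι DahaR (2 : Fin 5) * ι DahaR (3 : Fin 5)) 1
  | Yinv_Y : DahaRel (ι DahaR (3 : Fin 5) * ι DahaR (2 : Fin 5)) 1
  | hecke : DahaRel
      ((ι DahaR (4 : Fin 5) - algebraMap DahaR (FreeAlgebra DahaR (Fin 5)) dahaTau) *
        (ι DahaR (4 : Fin 5) + algebraMap DahaR (FreeAlgebra DahaR (Fin 5)) dahaTauInv)) 0
  | TXT : DahaRel (ι DahaR (4 : Fin 5) * ι DahaR (0 : Fin 5) * ι DahaR (4 : Fin 5))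
      (ι DahaR (1 : Fin 5))
  | TYinvT : DahaRel (ι DahaR (4 : Fin 5) * ι DahaR (3 : Fin 5) * ι DahaR (4 : Fin 5))
      (ι DahaR (2 : Fin 5))
  | cross : DahaRel
      (ι DahaR (3 : Fin 5) * ι DahaR (1 : Fin 5) * ι DahaR (2 : Fin 5) *
        ι DahaR (0 : Fin 5) * ι DahaR (4 : Fin 5) * ι DahaR (4 : Fin 5))
      (algebraMap DahaR (FreeAlgebra DahaR (Fin 5)) dahaQ)

/-- The double affine Hecke algebra `H^{ell}` of type `A₁`. -/
abbrev Daha := RingQuot DahaRel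

/-- Generators of `H^{ell}`. -/
noncomputable def Daha.X : Daha := RingQuot.mkAlgHom DahaR DahaRel (ι DahaR (0 : Fin 5))
noncomputable def Daha.Xinv : Daha := RingQuot.mkAlgHom DahaR DahaRel (ι DahaR (1 : Fin 5))
noncomputable def Daha.Y : Daha := RingQuot.mkAlgHom DahaR DahaRel (ι DahaR (2 : Fin 5))
noncomputable def Daha.Yinv : Daha := RingQuot.mkAlgHom DahaR DahaRel (ι DahaR (3 : Fin 5))
noncomputable def Daha.T : Daha := RingQuot.mkAlgHom DahaR DahaRel (ι DahaR (4 : Fin 5))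

/-- The power `X^i` for `i ∈ ℤ`, negative powers interpreted via `X⁻¹`. -/
noncomputable def Daha.Xpow (i : ℤ) : Daha :=
  if 0 ≤ i then Daha.X ^ i.toNat else Daha.Xinv ^ (-i).toNat

/-- The power `Y^j` for `j ∈ ℤ`, negative powers interpreted via `Y⁻¹`. -/
noncomputable def Daha.Ypow (j : ℤ) : Daha :=
  if 0 ≤ j then Daha.Y ^ j.toNat else Daha.Yinv ^ (-j).toNat

/-! ### Spanning -/

section Spanning

variable {R H : Type*} [CommRing R] [Ring H] [Algebra R H]

/-- The monomial `x^i t^ε y^j`, for units `x`, `y` and an element `t` of a ring. -/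
def pbwMonomial (x y : Hˣ) (t : H) (p : ℤ × Bool × ℤ) : H :=
  ↑(x ^ p.1) * (if p.2.1 then t else 1) * ↑(y ^ p.2.2)

/-- The `R`-span of the monomials `x^i t^ε y^j`. -/
def pbwSpan (R : Type*) {H : Type*} [CommRing R] [Ring H] [Algebra R H] (x y : Hˣ) (t : H) :
    Submodule R H :=
  Submodule.span R (Set.range (pbwMonomial x y t))

variable {x y : Hˣ} {t : H}

lemma pbwMonomial_mem (p : ℤ × Bool × ℤ) : pbwMonomial x y t p ∈ pbwSpan R x y t :=
  Submodule.subset_span ⟨p, rfl⟩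

lemma mul_mem_pbwSpan_of_monomial {a : H}
    (ha : ∀ p, a * pbwMonomial x y t p ∈ pbwSpan R x y t) {b : H} (hb : b ∈ pbwSpan R x y t) :
    a * b ∈ pbwSpan R x y t := by
  induction hb using Submodule.span_induction with
  | mem b hb => obtain ⟨p, rfl⟩ := hb; exact ha p
  | zero => simp
  | add b b' _ _ hb hb' => rw [mul_add]; exact add_mem hb hb'
  | smul r b _ hb => rw [mul_smul_comm]; exact Submodule.smul_mem _ r hb

lemma zpow_mul_mem_pbwSpan (n : ℤ) {b : H} (hb : b ∈ pbwSpan R x y t) :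
    ↑(x ^ n) * b ∈ pbwSpan R x y t := by
  refine mul_mem_pbwSpan_of_monomial (fun p => ?_) hb
  have : (↑(x ^ n) : H) * pbwMonomial x y t p = pbwMonomial x y t (n + p.1, p.2) := by
    simp only [pbwMonomial, zpow_add, Units.val_mul, mul_assoc]
  rw [this]
  exact pbwMonomial_mem _

lemma x_mul_mem_pbwSpan {b : H} (hb : b ∈ pbwSpan R x y t) : ↑x * b ∈ pbwSpan R x y t := by
  simpa using zpow_mul_mem_pbwSpan 1 hb

lemma xinv_mul_mem_pbwSpan {b : H} (hb : b ∈ pbwSpan R x y t) : ↑x⁻¹ * b ∈ pbwSpan R x y t := by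
  simpa using zpow_mul_mem_pbwSpan (-1) hb

/-- Induction on the power of `x`: left multiplication by `a` preserves the span if it maps the
monomials `t^ε y^j` into the span and if, for `b` in the span, `a b` being in the span forces
`a x b` and `a x⁻¹ b` to be there. -/
lemma mul_mem_pbwSpan_of_commutation {a : H}
    (h0 : ∀ e j, a * pbwMonomial x y t (0, e, j) ∈ pbwSpan R x y t)
    (hx : ∀ b ∈ pbwSpan R x y t, a * b ∈ pbwSpan R x y t → a * (x * b) ∈ pbwSpan R x y t)
    (hxinv : ∀ b ∈ pbwSpan R x y t,
      a * b ∈ pbwSpan R x y t → a * (↑x⁻¹ * b) ∈ pbwSpan R x y t)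
    {b : H} (hb : b ∈ pbwSpan R x y t) : a * b ∈ pbwSpan R x y t := by
  refine mul_mem_pbwSpan_of_monomial (fun p => ?_) hb
  obtain ⟨i, e, j⟩ := p
  induction i using Int.induction_on with
  | zero => exact h0 e j
  | succ i ih =>
    have : pbwMonomial x y t ((i : ℤ) + 1, e, j) = x * pbwMonomial x y t ((i : ℤ), e, j) := by
      simp only [pbwMonomial, add_comm (i : ℤ) 1, zpow_add, Units.val_mul, mul_assoc, zpow_one]
    rw [this]
    exact hx _ (pbwMonomial_mem _) ih
  | pred i ih =>
    have : pbwMonomial x y t (-(i : ℤ) - 1, e, j) =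
        ↑x⁻¹ * pbwMonomial x y t (-(i : ℤ), e, j) := by
      simp only [pbwMonomial, sub_eq_add_neg, add_comm (-(i : ℤ)) (-1), zpow_add, Units.val_mul,
        mul_assoc, zpow_neg_one]
    rw [this]
    exact hxinv _ (pbwMonomial_mem _) ih

variable {c : R} {q : Rˣ}

lemma t_mul_x (ht : t * t = c • t + 1) (htx : t * x * t = ↑x⁻¹) :
    t * x = ↑x⁻¹ * t - c • (↑x⁻¹ : H) := by
  have h1 : t * (t - c • 1) = 1 := by rw [mul_sub, ht]; simp
  calc t * x = (t * x * t) * (t - c • 1) := by rw [mul_assoc _ t, h1, mul_one]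
    _ = _ := by rw [htx, mul_sub]; simp

lemma t_mul_xinv (ht : t * t = c • t + 1) (htx : t * x * t = ↑x⁻¹) :
    t * ↑x⁻¹ = x * t + c • (↑x⁻¹ : H) := by
  have h := t_mul_x ht htx
  have h2 : ↑x * (t * ↑x) * (↑x⁻¹ : H) = (t - c • 1) * ↑x⁻¹ := by
    rw [h, mul_sub]; simp
  rw [mul_assoc, mul_assoc, Units.mul_inv, mul_one, sub_mul] at h2
  rw [h2]; simp

lemma t_mul_mem_pbwSpan (ht : t * t = c • t + 1) (htx : t * x * t = ↑x⁻¹)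
    {b : H} (hb : b ∈ pbwSpan R x y t) : t * b ∈ pbwSpan R x y t := by
  refine mul_mem_pbwSpan_of_commutation (fun e j => ?_) (fun b hb h => ?_) (fun b hb h => ?_) hb
  · cases e
    · have : t * pbwMonomial x y t (0, false, j) = pbwMonomial x y t (0, true, j) := by
        simp [pbwMonomial]
      rw [this]; exact pbwMonomial_mem _
    · have : t * pbwMonomial x y t (0, true, j) =
          c • pbwMonomial x y t (0, true, j) + pbwMonomial x y t (0, false, j) := by
        simp [pbwMonomial, ← mul_assoc, ht, add_mul]
      rw [this]
      exact add_mem (Submodule.smul_mem _ _ (pbwMonomial_mem _)) (pbwMonomial_mem _)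
  · rw [← mul_assoc, t_mul_x ht htx, sub_mul, mul_assoc, smul_mul_assoc]
    exact sub_mem (xinv_mul_mem_pbwSpan h) (Submodule.smul_mem _ _ (xinv_mul_mem_pbwSpan hb))
  · rw [← mul_assoc, t_mul_xinv ht htx, add_mul, mul_assoc, smul_mul_assoc]
    exact add_mem (x_mul_mem_pbwSpan h) (Submodule.smul_mem _ _ (xinv_mul_mem_pbwSpan hb))

/-- The involution `π = t y⁻¹` satisfies `π x⁻¹ = q x π`. -/
lemma pi_mul_xinv (ht : t * t = c • t + 1) (htx : t * x * t = ↑x⁻¹)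
    (hty : t * ↑y⁻¹ * t = y) (hq : ↑y⁻¹ * ↑x⁻¹ * ↑y * ↑x * t * t = (q : R) • (1 : H)) :
    t * ↑y⁻¹ * ↑x⁻¹ = (q : R) • (x * (t * ↑y⁻¹)) := by
  have h1 : t * (t - c • 1) = 1 := by rw [mul_sub, ht]; simp
  have h2 : (y : H) * x * t * t = (q : R) • (x * y : H) := by
    have : (x * y : H) * (↑y⁻¹ * ↑x⁻¹ * ↑y * ↑x * t * t) = y * x * t * t := by
      simp only [mul_assoc, Units.mul_inv_cancel_left]
    rw [← this, hq]; simp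
  have h3 : (y : H) * (t - c • 1) = t * ↑y⁻¹ := by
    rw [← hty, mul_assoc _ t, h1, mul_one]
  calc t * ↑y⁻¹ * ↑x⁻¹ = (t * ↑y⁻¹ * t) * x * t := by rw [← htx]; simp only [mul_assoc]
    _ = (y * x * t * t) * (t - c • 1) := by rw [hty, mul_assoc _ t, h1, mul_one]
    _ = _ := by rw [h2, smul_mul_assoc, mul_assoc, h3]

lemma pi_mul_x (h : t * ↑y⁻¹ * ↑x⁻¹ = (q : R) • (x * (t * ↑y⁻¹))) :
    t * ↑y⁻¹ * x = (↑q⁻¹ : R) • (↑x⁻¹ * (t * ↑y⁻¹)) := by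
  have h2 : t * ↑y⁻¹ = (q : R) • (↑x * (t * ↑y⁻¹) * ↑x) := by
    rw [← smul_mul_assoc, ← h, mul_assoc _ _ (x : H), Units.inv_mul, mul_one]
  have h3 : (↑x⁻¹ * (t * ↑y⁻¹) : H) = (q : R) • (t * ↑y⁻¹ * ↑x) := by
    conv_lhs => rw [h2]
    rw [mul_smul_comm, mul_assoc (x : H), Units.inv_mul_cancel_left]
  rw [h3, smul_smul, Units.inv_mul, one_smul]

lemma pi_mul_mem_pbwSpan (ht : t * t = c • t + 1) (htx : t * x * t = ↑x⁻¹)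
    (hty : t * ↑y⁻¹ * t = y) (hq : ↑y⁻¹ * ↑x⁻¹ * ↑y * ↑x * t * t = (q : R) • (1 : H))
    {b : H} (hb : b ∈ pbwSpan R x y t) : t * ↑y⁻¹ * b ∈ pbwSpan R x y t := by
  have hπ := pi_mul_xinv ht htx hty hq
  refine mul_mem_pbwSpan_of_commutation (fun e j => ?_) (fun b hb h => ?_) (fun b hb h => ?_) hb
  · cases e
    · have : t * ↑y⁻¹ * pbwMonomial x y t (0, false, j) = pbwMonomial x y t (0, true, -1 + j) := by
        simp [pbwMonomial, zpow_add, mul_assoc]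
      rw [this]; exact pbwMonomial_mem _
    · have : t * ↑y⁻¹ * pbwMonomial x y t (0, true, j) = pbwMonomial x y t (0, false, 1 + j) := by
        simp [pbwMonomial, zpow_add, ← mul_assoc, hty]
      rw [this]; exact pbwMonomial_mem _
  · rw [← mul_assoc, pi_mul_x hπ, smul_mul_assoc, mul_assoc]
    exact Submodule.smul_mem _ _ (xinv_mul_mem_pbwSpan h)
  · rw [← mul_assoc, hπ, smul_mul_assoc, mul_assoc]
    exact Submodule.smul_mem _ _ (x_mul_mem_pbwSpan h)

lemma y_mul_mem_pbwSpan (ht : t * t = c • t + 1) (htx : t * x * t = ↑x⁻¹)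
    (hty : t * ↑y⁻¹ * t = y) (hq : ↑y⁻¹ * ↑x⁻¹ * ↑y * ↑x * t * t = (q : R) • (1 : H))
    {b : H} (hb : b ∈ pbwSpan R x y t) : ↑y * b ∈ pbwSpan R x y t := by
  rw [← hty, mul_assoc]
  exact pi_mul_mem_pbwSpan ht htx hty hq (t_mul_mem_pbwSpan ht htx hb)

lemma yinv_mul_mem_pbwSpan (ht : t * t = c • t + 1) (htx : t * x * t = ↑x⁻¹)
    (hty : t * ↑y⁻¹ * t = y) (hq : ↑y⁻¹ * ↑x⁻¹ * ↑y * ↑x * t * t = (q : R) • (1 : H))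
    {b : H} (hb : b ∈ pbwSpan R x y t) : ↑y⁻¹ * b ∈ pbwSpan R x y t := by
  have h : ↑y⁻¹ * b = t * (t * ↑y⁻¹ * b) - c • (t * ↑y⁻¹ * b) := by
    rw [← mul_assoc, ← mul_assoc, ht]; simp [add_mul]
  have hb' := pi_mul_mem_pbwSpan ht htx hty hq hb
  rw [h]
  exact sub_mem (t_mul_mem_pbwSpan ht htx hb') (Submodule.smul_mem _ _ hb')

end Spanning

/-! ### The induced representation -/

section Representation

open LaurentPolynomial (T C)

variable {k : Type*} [CommRing k]

/-- A property of Laurent polynomials that is `k`-linear, holds for `1` and is preserved by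
multiplication by `x` and `x⁻¹` holds for all Laurent polynomials. -/
lemma laurent_induction {P : LaurentPolynomial k → Prop} (h1 : P 1)
    (hadd : ∀ f g, P f → P g → P (f + g)) (hsmul : ∀ (a : k) f, P f → P (a • f))
    (hx : ∀ f, P f → P (T 1 * f)) (hxinv : ∀ f, P f → P (T (-1) * f))
    (f : LaurentPolynomial k) : P f := by
  have hT : ∀ n : ℤ, P (T n) := by
    intro n
    induction n using Int.induction_on with
    | zero => exact h1
    | succ i ih => rw [add_comm, LaurentPolynomial.T_add]; exact hx _ ih
    | pred i ih => rw [sub_eq_add_neg, add_comm, LaurentPolynomial.T_add]; exact hxinv _ ih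
  induction f using LaurentPolynomial.induction_on' with
  | add p q hp hq => exact hadd _ _ hp hq
  | C_mul_T n a => rw [← LaurentPolynomial.smul_eq_C_mul]; exact hsmul _ _ (hT n)

/-- Evaluation of Laurent polynomials at a unit of a not necessarily commutative algebra. -/
noncomputable def laurentEval {A : Type*} [Ring A] [Algebra k A] (u : Aˣ) :
    LaurentPolynomial k →ₐ[k] A :=
  AddMonoidAlgebra.lift k A ℤ ((Units.coeHom A).comp (zpowersHom Aˣ u))

lemma laurentEval_T {A : Type*} [Ring A] [Algebra k A] (u : Aˣ) (n : ℤ) :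
    laurentEval (k := k) u (T n) = ↑(u ^ n) := by
  rw [laurentEval, T, AddMonoidAlgebra.lift_single]; simp

/-- The unit `x` of `k[x, x⁻¹]`. -/
noncomputable def laurentX : (LaurentPolynomial k)ˣ where
  val := T 1
  inv := T (-1)
  val_inv := by rw [← LaurentPolynomial.T_add]; simp
  inv_val := by rw [← LaurentPolynomial.T_add]; simp

/-- The matrix `!![x⁻¹, -c x⁻¹; 0, x]`, whose powers compute the Demazure operator. -/
noncomputable def demazureUnit (c : k) : (Matrix (Fin 2) (Fin 2) (LaurentPolynomial k))ˣ where
  val := !![T (-1), -c • T (-1); 0, T 1]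
  inv := !![T 1, c • T (-1); 0, T (-1)]
  val_inv := by
    ext i j; fin_cases i <;> fin_cases j <;>
      simp [-LaurentPolynomial.T_mul, Matrix.mul_apply, Fin.sum_univ_two, ← LaurentPolynomial.T_add]
  inv_val := by
    ext i j; fin_cases i <;> fin_cases j <;>
      simp [-LaurentPolynomial.T_mul, Matrix.mul_apply, Fin.sum_univ_two, ← LaurentPolynomial.T_add]

/-- The algebra homomorphism `f ↦ !![s f, D f; 0, f]` where `s` is the reflection `x ↦ x⁻¹` and
`D f = c (s f - f) / (x² - 1)` is the Demazure operator; multiplicativity encodes the twisted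
Leibniz rule of `D` without any division. -/
noncomputable def demazureHom (c : k) :
    LaurentPolynomial k →ₐ[k] Matrix (Fin 2) (Fin 2) (LaurentPolynomial k) :=
  laurentEval (demazureUnit c)

lemma demazureHom_x (c : k) :
    demazureHom c (T 1) = !![T (-1), -c • T (-1); 0, T 1] := by
  rw [demazureHom, laurentEval_T, zpow_one]; rfl

lemma demazureHom_xinv (c : k) :
    demazureHom c (T (-1)) = !![T 1, c • T (-1); 0, T (-1)] := by
  rw [demazureHom, laurentEval_T, zpow_neg_one]; rfl

lemma demazureHom_lower (c : k) (f : LaurentPolynomial k) :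
    demazureHom c f 1 0 = 0 ∧ demazureHom c f 1 1 = f := by
  induction f using laurent_induction with
  | h1 => simp
  | hadd f g hf hg => simp [-LaurentPolynomial.T_mul, hf, hg]
  | hsmul a f hf => simp [-LaurentPolynomial.T_mul, hf]
  | hx f hf => simp [-LaurentPolynomial.T_mul, demazureHom_x, Matrix.mul_apply, Fin.sum_univ_two, hf]
  | hxinv f hf => simp [-LaurentPolynomial.T_mul, demazureHom_xinv, Matrix.mul_apply, Fin.sum_univ_two, hf]

/-- The reflection `s : x ↦ x⁻¹`. -/
noncomputable def xReflect (c : k) : LaurentPolynomial k →ₗ[k] LaurentPolynomial k :=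
  Matrix.entryLinearMap k _ 0 0 ∘ₗ (demazureHom c).toLinearMap

/-- The Demazure operator `D f = c (s f - f) / (x² - 1)`. -/
noncomputable def demazure (c : k) : LaurentPolynomial k →ₗ[k] LaurentPolynomial k :=
  Matrix.entryLinearMap k _ 0 1 ∘ₗ (demazureHom c).toLinearMap

lemma xReflect_one (c : k) : xReflect c 1 = 1 := by simp [-LaurentPolynomial.T_mul, xReflect]

lemma demazure_one (c : k) : demazure c 1 = 0 := by simp [-LaurentPolynomial.T_mul, demazure]

lemma xReflect_x_mul (c : k) (f : LaurentPolynomial k) : xReflect c (T 1 * f) = T (-1) * xReflect c f := by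
  change demazureHom c (T 1 * f) 0 0 = T (-1) * demazureHom c f 0 0
  rw [map_mul, Matrix.mul_apply, Fin.sum_univ_two, (demazureHom_lower c f).1, demazureHom_x]
  simp [-LaurentPolynomial.T_mul]

lemma demazure_x_mul (c : k) (f : LaurentPolynomial k) :
    demazure c (T 1 * f) = T (-1) * (demazure c f - c • f) := by
  change demazureHom c (T 1 * f) 0 1 = T (-1) * (demazureHom c f 0 1 - c • f)
  rw [map_mul, Matrix.mul_apply, Fin.sum_univ_two, (demazureHom_lower c f).2, demazureHom_x]
  simp [-LaurentPolynomial.T_mul, mul_add, sub_eq_add_neg]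

/-- The unit `q⁻¹ x⁻¹` of `k[x, x⁻¹]`. -/
noncomputable def qUnit (q : kˣ) : (LaurentPolynomial k)ˣ where
  val := (↑q⁻¹ : k) • T (-1)
  inv := (q : k) • T 1
  val_inv := by simp [-LaurentPolynomial.T_mul, ← LaurentPolynomial.T_add, smul_smul]
  inv_val := by simp [-LaurentPolynomial.T_mul, ← LaurentPolynomial.T_add, smul_smul]

/-- The affine reflection `σ : x ↦ q⁻¹ x⁻¹`. -/
noncomputable def affRefl (q : kˣ) : LaurentPolynomial k →ₐ[k] LaurentPolynomial k :=
  laurentEval (qUnit q)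

lemma affRefl_x (q : kˣ) : affRefl q (T 1) = (↑q⁻¹ : k) • T (-1) := by
  rw [affRefl, laurentEval_T, zpow_one]; rfl

lemma affRefl_xinv (q : kˣ) : affRefl q (T (-1)) = (q : k) • T 1 := by
  rw [affRefl, laurentEval_T, zpow_neg_one]; rfl

lemma affRefl_affRefl (q : kˣ) (f : LaurentPolynomial k) : affRefl q (affRefl q f) = f := by
  induction f using laurent_induction with
  | h1 => simp
  | hadd f g hf hg => simp [-LaurentPolynomial.T_mul, hf, hg]
  | hsmul a f hf => simp [-LaurentPolynomial.T_mul, hf]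
  | hx f hf => simp [-LaurentPolynomial.T_mul, hf, affRefl_x, affRefl_xinv, smul_smul]
  | hxinv f hf => simp [-LaurentPolynomial.T_mul, hf, affRefl_x, affRefl_xinv, smul_smul]

/-- The representation space: with `k = R[y, y⁻¹]`, the pairs `(x^i y^j, 0)` and `(0, x^i y^j)`
stand for `X^i Y^j` and `X^i T Y^j`. -/
abbrev RepSpace (k : Type*) [CommRing k] := LaurentPolynomial k × LaurentPolynomial k

/-- The action of `X^n`: multiplication by `x^n`. -/
noncomputable def repX (n : ℤ) : Module.End k (RepSpace k) :=
  (LinearMap.mulLeft k (T n)).prodMap (LinearMap.mulLeft k (T n))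

/-- The action of `T`, namely `f ⊗ n ↦ s f ⊗ T n + D f ⊗ n`, where `T` acts on the span of
the `T^ε Y^j` by `(f, g) ↦ (g, f + c g)`. -/
noncomputable def repT (c : k) : Module.End k (RepSpace k) :=
  (demazure c ∘ₗ LinearMap.fst k _ _ + xReflect c ∘ₗ LinearMap.snd k _ _).prod
    (demazure c ∘ₗ LinearMap.snd k _ _ + xReflect c ∘ₗ LinearMap.fst k _ _ +
      c • (xReflect c ∘ₗ LinearMap.snd k _ _))

/-- The action of the involution `π = Y T⁻¹`. -/
noncomputable def repPi (q y : kˣ) : Module.End k (RepSpace k) :=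
  ((y : k) • ((affRefl q).toLinearMap ∘ₗ LinearMap.snd k _ _)).prod
    ((↑y⁻¹ : k) • ((affRefl q).toLinearMap ∘ₗ LinearMap.fst k _ _))

lemma repX_apply (n : ℤ) (v : RepSpace k) : repX n v = (T n * v.1, T n * v.2) := rfl

lemma repT_apply (c : k) (v : RepSpace k) : repT c v =
    (demazure c v.1 + xReflect c v.2, demazure c v.2 + xReflect c v.1 + c • xReflect c v.2) := rfl

lemma repPi_apply (q y : kˣ) (v : RepSpace k) : repPi q y v =
    ((y : k) • affRefl q v.2, (↑y⁻¹ : k) • affRefl q v.1) := rfl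

lemma repX_mul_repX (m n : ℤ) : (repX m * repX n : Module.End k (RepSpace k)) = repX (m + n) := by
  ext v <;> simp [-LaurentPolynomial.T_mul, repX_apply, LaurentPolynomial.T_add, mul_assoc]

lemma repX_zero : (repX 0 : Module.End k (RepSpace k)) = 1 := by
  refine LinearMap.ext fun v => ?_
  simp [-LaurentPolynomial.T_mul, repX_apply]

lemma repPi_mul_repPi (q y : kˣ) : repPi q y * repPi q y = 1 := by
  refine LinearMap.ext fun v => ?_
  simp [-LaurentPolynomial.T_mul, repPi_apply, affRefl_affRefl, smul_smul]

lemma repPi_mul_repXinv (q y : kˣ) :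
    repPi q y * repX (-1) = (q : k) • (repX 1 * repPi q y) := by
  refine LinearMap.ext fun v => ?_
  simp [-LaurentPolynomial.T_mul, repPi_apply, repX_apply, affRefl_xinv, smul_smul, mul_comm]

lemma repT_mul_repX (c : k) : repT c * repX 1 = repX (-1) * (repT c - c • 1) := by
  refine LinearMap.ext fun v => ?_
  ext1
  · simp [-LaurentPolynomial.T_mul, repT_apply, repX_apply, xReflect_x_mul, demazure_x_mul, mul_add, mul_sub]; abel
  · simp [-LaurentPolynomial.T_mul, repT_apply, repX_apply, xReflect_x_mul, demazure_x_mul, mul_add, mul_sub]; abel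

lemma repT_mul_repXinv (c : k) : repT c * repX (-1) = repX 1 * repT c + c • repX (-1) := by
  have h : repX 1 * (repT c * repX 1) * repX (-1) = (repT c - c • 1) * repX (-1) := by
    rw [repT_mul_repX, ← mul_assoc, repX_mul_repX]; simp [-LaurentPolynomial.T_mul, repX_zero]
  rw [mul_assoc, mul_assoc, repX_mul_repX] at h
  simp only [add_neg_cancel, repX_zero, mul_one, sub_mul, smul_mul_assoc, one_mul] at h
  rw [h]; abel

/-- The defect `T² - c T - 1` commutes with `X` because of the commutation rules, and it kills
`(1, 0)` and `(0, 1)`, so it vanishes. -/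
lemma repT_mul_repT (c : k) : repT c * repT c = c • repT c + 1 := by
  set E := repT c * repT c - c • repT c with hE
  have hx : E * repX 1 = repX 1 * E := by
    simp only [hE, sub_mul, mul_sub, mul_assoc, smul_mul_assoc, repT_mul_repX, mul_smul_comm,
      mul_one]
    rw [← mul_assoc (repT c), repT_mul_repXinv]
    simp only [add_mul, smul_mul_assoc, mul_assoc, smul_sub, smul_add]
    abel
  have hxinv : E * repX (-1) = repX (-1) * E := by
    have h : repX (-1) * (E * repX 1) * repX (-1) = repX (-1) * (repX 1 * E) * repX (-1) := by
      rw [hx]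
    rw [mul_assoc, mul_assoc, repX_mul_repX, ← mul_assoc (repX (-1)) (repX 1), repX_mul_repX] at h
    simpa [repX_zero] using h.symm
  have key : ∀ f : LaurentPolynomial k, E (f, 0) = (f, 0) ∧ E (0, f) = (0, f) := by
    intro f
    induction f using laurent_induction with
    | h1 => simp [-LaurentPolynomial.T_mul, hE, repT_apply, xReflect_one, demazure_one]
    | hadd f g hf hg =>
      have h1 : ((f + g, 0) : RepSpace k) = (f, 0) + (g, 0) := by simp
      have h2 : ((0, f + g) : RepSpace k) = (0, f) + (0, g) := by simp
      rw [h1, h2, map_add, map_add, hf.1, hf.2, hg.1, hg.2]; simp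
    | hsmul a f hf =>
      have h1 : ((a • f, 0) : RepSpace k) = a • (f, 0) := by simp
      have h2 : ((0, a • f) : RepSpace k) = a • (0, f) := by simp
      rw [h1, h2, map_smul, map_smul, hf.1, hf.2]; simp
    | hx f hf =>
      have h1 : ((T 1 * f, 0) : RepSpace k) = repX 1 (f, 0) := by simp [-LaurentPolynomial.T_mul, repX_apply]
      have h2 : ((0, T 1 * f) : RepSpace k) = repX 1 (0, f) := by simp [-LaurentPolynomial.T_mul, repX_apply]
      rw [h1, h2, ← Module.End.mul_apply, ← Module.End.mul_apply, hx, Module.End.mul_apply,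
        Module.End.mul_apply, hf.1, hf.2]
      simp
    | hxinv f hf =>
      have h1 : ((T (-1) * f, 0) : RepSpace k) = repX (-1) (f, 0) := by simp [-LaurentPolynomial.T_mul, repX_apply]
      have h2 : ((0, T (-1) * f) : RepSpace k) = repX (-1) (0, f) := by simp [-LaurentPolynomial.T_mul, repX_apply]
      rw [h1, h2, ← Module.End.mul_apply, ← Module.End.mul_apply, hxinv, Module.End.mul_apply,
        Module.End.mul_apply, hf.1, hf.2]
      simp
  have hE1 : E = 1 := by
    refine LinearMap.ext fun v => ?_
    have hv : v = (v.1, 0) + (0, v.2) := by simp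
    rw [hv, map_add, (key _).1, (key _).2]; simp
  rw [← hE1, hE]; abel

lemma repT_mul_inv (c : k) : repT c * (repT c - c • 1) = 1 := by
  rw [mul_sub, repT_mul_repT]; simp

lemma inv_mul_repT (c : k) : (repT c - c • 1) * repT c = 1 := by
  rw [sub_mul, repT_mul_repT]; simp

/-- The action of `Y = π T`. -/
noncomputable def repY (c : k) (q y : kˣ) : (Module.End k (RepSpace k))ˣ where
  val := repPi q y * repT c
  inv := (repT c - c • 1) * repPi q y
  val_inv := by
    rw [mul_assoc, ← mul_assoc (repT c), repT_mul_inv, one_mul, repPi_mul_repPi]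
  inv_val := by
    rw [mul_assoc, ← mul_assoc (repPi q y), repPi_mul_repPi, one_mul, inv_mul_repT]

lemma repT_repX_repT (c : k) : repT c * repX 1 * repT c = repX (-1) := by
  rw [repT_mul_repX, mul_assoc, inv_mul_repT, mul_one]

lemma repT_repYinv_repT (c : k) (q y : kˣ) :
    repT c * ↑(repY c q y)⁻¹ * repT c = repY c q y := by
  change repT c * ((repT c - c • 1) * repPi q y) * repT c = repPi q y * repT c
  rw [← mul_assoc, repT_mul_inv, one_mul]

lemma rep_cross (c : k) (q y : kˣ) :
    ↑(repY c q y)⁻¹ * (repX (-1) : Module.End k (RepSpace k)) * ↑(repY c q y) *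
      (repX 1 : Module.End k (RepSpace k)) * repT c * repT c = (q : k) • 1 := by
  change (repT c - c • 1) * repPi q y * repX (-1) * (repPi q y * repT c) * repX 1 * repT c * repT c
    = (q : k) • 1
  calc _ = (repT c - c • 1) * ((repPi q y * repX (-1)) * repPi q y) *
        (repT c * repX 1 * repT c) * repT c := by simp only [mul_assoc]
    _ = (q : k) • ((repT c - c • 1) * (repX 1 * (repPi q y * repPi q y)) *
        repX (-1) * repT c) := by
      rw [repPi_mul_repXinv, repT_repX_repT]
      simp only [smul_mul_assoc, mul_smul_comm, mul_assoc]
    _ = _ := by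
      rw [repPi_mul_repPi, mul_one, mul_assoc _ (repX 1), repX_mul_repX]
      simp [-LaurentPolynomial.T_mul, repX_zero, inv_mul_repT]

lemma repT_const (c a : k) : repT c (C a, 0) = (0, C a) := by
  have h : (C a : LaurentPolynomial k) = a • 1 := by simp [-LaurentPolynomial.T_mul, LaurentPolynomial.smul_eq_C_mul]
  rw [h]
  simp [-LaurentPolynomial.T_mul, repT_apply, xReflect_one, demazure_one]

lemma repY_const (c a : k) (q y : kˣ) :
    (repY c q y : Module.End k (RepSpace k)) (C a, 0) = (C (y * a), 0) := by
  have h : (C a : LaurentPolynomial k) = a • 1 := by simp [-LaurentPolynomial.T_mul, LaurentPolynomial.smul_eq_C_mul]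
  change repPi q y (repT c (C a, 0)) = _
  rw [repT_const]
  simp only [repPi_apply, h, map_smul, map_one, map_zero, smul_zero, smul_smul]
  simp [-LaurentPolynomial.T_mul, LaurentPolynomial.smul_eq_C_mul]

lemma repY_zpow_const (c : k) (q y : kˣ) (j : ℤ) :
    (↑(repY c q y ^ j) : Module.End k (RepSpace k)) (1, 0) = (C ↑(y ^ j), 0) := by
  induction j using Int.induction_on with
  | zero => simp
  | succ i ih =>
    rw [add_comm, zpow_add, zpow_add, Units.val_mul, Module.End.mul_apply, ih, zpow_one, zpow_one,
      repY_const, Units.val_mul]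
  | pred i ih =>
    have h : (repY c q y : Module.End k (RepSpace k)) (C ↑(y ^ (-(i : ℤ) - 1)), 0) =
        (C ↑(y ^ (-(i : ℤ))), 0) := by
      rw [repY_const, ← Units.val_mul, ← zpow_one_add]; congr 4; ring
    rw [sub_eq_add_neg, add_comm, zpow_add, Units.val_mul, Module.End.mul_apply, ih, ← h,
      zpow_neg_one, ← Module.End.mul_apply, Units.inv_mul, Module.End.one_apply]
    congr 4; ring

lemma laurentX_zpow (j : ℤ) : ((laurentX ^ j : (LaurentPolynomial k)ˣ) : LaurentPolynomial k) =
    T j := by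
  induction j using Int.induction_on with
  | zero => simp
  | succ i ih => rw [zpow_add_one, Units.val_mul, ih, LaurentPolynomial.T_add]; rfl
  | pred i ih =>
    rw [zpow_sub_one, Units.val_mul, ih, sub_eq_add_neg, LaurentPolynomial.T_add]; rfl

end Representation

/-! ### The double affine Hecke algebra -/

/-- The two forms of the quadratic Hecke relation. -/
lemma hecke_iff {R H : Type*} [CommRing R] [Ring H] [Algebra R H] {a b : R} (hab : a * b = 1)
    {t : H} : (t - algebraMap R H a) * (t + algebraMap R H b) = 0 ↔ t * t = (a - b) • t + 1 := by
  have h : (t - algebraMap R H a) * (t + algebraMap R H b) = t * t - ((a - b) • t + 1) := by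
    rw [sub_mul, mul_add, mul_add, ← map_mul, hab, map_one, ← Algebra.commutes b t,
      ← Algebra.smul_def, ← Algebra.smul_def, sub_smul]
    abel
  rw [h, sub_eq_zero]

lemma dahaTau_mul_inv : dahaTau * dahaTauInv = 1 := by
  rw [dahaTau, dahaTauInv, ← map_mul, ← LaurentPolynomial.T_add]; simp

/-- The Hecke parameter `τ - τ⁻¹`. -/
noncomputable def dahaC : DahaR := dahaTau - dahaTauInv

/-- `q` as a unit of `R`. -/
noncomputable def dahaQUnit : DahaRˣ := laurentX

/-- The ring structure of `H^{ell}`, with the semiring structure of the quotient definitionally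
unchanged. -/
noncomputable instance Daha.instRing : Ring Daha := Algebra.semiringToRing DahaR

namespace Daha

/-- `X` as a unit. -/
noncomputable def Xu : Dahaˣ where
  val := X
  inv := Xinv
  val_inv := (map_mul _ _ _).symm.trans ((RingQuot.mkAlgHom_rel DahaR DahaRel.X_Xinv).trans (map_one _))
  inv_val := (map_mul _ _ _).symm.trans ((RingQuot.mkAlgHom_rel DahaR DahaRel.Xinv_X).trans (map_one _))

/-- `Y` as a unit. -/
noncomputable def Yu : Dahaˣ where
  val := Y
  inv := Yinv
  val_inv := (map_mul _ _ _).symm.trans ((RingQuot.mkAlgHom_rel DahaR DahaRel.Y_Yinv).trans (map_one _))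
  inv_val := (map_mul _ _ _).symm.trans ((RingQuot.mkAlgHom_rel DahaR DahaRel.Yinv_Y).trans (map_one _))

lemma Xpow_eq (i : ℤ) : Xpow i = ↑(Xu ^ i) := by
  unfold Xpow
  split_ifs with h
  · lift i to ℕ using h
    simp [Xu]
  · obtain ⟨n, rfl⟩ : ∃ n : ℕ, i = -n := ⟨(-i).toNat, by omega⟩
    rw [neg_neg, Int.toNat_natCast, zpow_neg, zpow_natCast, ← inv_pow, Units.val_pow_eq_pow_val]
    rfl

lemma Ypow_eq (i : ℤ) : Ypow i = ↑(Yu ^ i) := by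
  unfold Ypow
  split_ifs with h
  · lift i to ℕ using h
    simp [Yu]
  · obtain ⟨n, rfl⟩ : ∃ n : ℕ, i = -n := ⟨(-i).toNat, by omega⟩
    rw [neg_neg, Int.toNat_natCast, zpow_neg, zpow_natCast, ← inv_pow, Units.val_pow_eq_pow_val]
    rfl

lemma monomial_eq : (fun p : ℤ × Bool × ℤ =>
    Xpow p.1 * (if p.2.1 then T else 1) * Ypow p.2.2) = pbwMonomial Xu Yu T := by
  funext p
  rw [Xpow_eq, Ypow_eq, pbwMonomial]

lemma T_mul_T : T * T = dahaC • T + 1 := by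
  have h := RingQuot.mkAlgHom_rel DahaR DahaRel.hecke
  simp only [map_mul, map_sub, map_add, AlgHom.commutes, map_zero] at h
  change (T - algebraMap _ _ _) * (T + algebraMap _ _ _) = 0 at h
  exact (hecke_iff dahaTau_mul_inv).1 h

lemma TXT_eq : T * Xu * T = ↑Xu⁻¹ := by
  have h := RingQuot.mkAlgHom_rel DahaR DahaRel.TXT
  rw [map_mul, map_mul] at h
  exact h

lemma TYinvT_eq : T * ↑Yu⁻¹ * T = Yu := by
  have h := RingQuot.mkAlgHom_rel DahaR DahaRel.TYinvT
  rw [map_mul, map_mul] at h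
  exact h

lemma cross_eq : ↑Yu⁻¹ * ↑Xu⁻¹ * ↑Yu * ↑Xu * T * T = (dahaQUnit : DahaR) • (1 : Daha) := by
  have h := RingQuot.mkAlgHom_rel DahaR DahaRel.cross
  rw [map_mul, map_mul, map_mul, map_mul, map_mul, AlgHom.commutes,
    Algebra.algebraMap_eq_smul_one] at h
  exact h

lemma pbwSpan_eq_top : pbwSpan DahaR Xu Yu T = ⊤ := by
  rw [eq_top_iff]
  rintro a -
  -- The span contains `1` and is stable under left multiplication by the generators.
  have one_mem : (1 : Daha) ∈ pbwSpan DahaR Xu Yu T := by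
    have := pbwMonomial_mem (R := DahaR) (x := Xu) (y := Yu) (t := T) (0, false, 0)
    simpa [pbwMonomial] using this
  suffices h : ∀ b ∈ pbwSpan DahaR Xu Yu T, a * b ∈ pbwSpan DahaR Xu Yu T by
    simpa using h 1 one_mem
  obtain ⟨f, rfl⟩ := RingQuot.mkAlgHom_surjective DahaR DahaRel a
  induction f using FreeAlgebra.induction with
  | grade0 r =>
    intro b hb
    rw [AlgHom.commutes, ← Algebra.smul_def]
    exact Submodule.smul_mem _ _ hb
  | grade1 i =>
    intro b hb
    fin_cases i
    · exact x_mul_mem_pbwSpan hb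
    · exact xinv_mul_mem_pbwSpan hb
    · exact y_mul_mem_pbwSpan T_mul_T TXT_eq TYinvT_eq cross_eq hb
    · exact yinv_mul_mem_pbwSpan T_mul_T TXT_eq TYinvT_eq cross_eq hb
    · exact t_mul_mem_pbwSpan T_mul_T TXT_eq hb
  | mul f g hf hg =>
    intro b hb
    rw [map_mul, mul_assoc]
    exact hf _ (hg _ hb)
  | add f g hf hg =>
    intro b hb
    rw [map_add, add_mul]
    exact add_mem (hf _ hb) (hg _ hb)

section Rep

variable {k : Type*} [CommRing k] [Algebra DahaR k] (y : kˣ)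

/-- The image of `τ - τ⁻¹` in `k`. -/
noncomputable def repC (k : Type*) [CommRing k] [Algebra DahaR k] : k := algebraMap DahaR k dahaC

/-- The image of `q` in `k`, as a unit. -/
noncomputable def repQ (k : Type*) [CommRing k] [Algebra DahaR k] : kˣ :=
  Units.map (algebraMap DahaR k).toMonoidHom dahaQUnit

/-- The values on the generators of the representation of `H^{ell}` on pairs of Laurent
polynomials. -/
noncomputable def repGen : Fin 5 → Module.End k (RepSpace k) :=
  ![repX 1, repX (-1), ↑(repY (repC k) (repQ k) y), ↑(repY (repC k) (repQ k) y)⁻¹, repT (repC k)]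

lemma repGen_rel ⦃a b : FreeAlgebra DahaR (Fin 5)⦄ (h : DahaRel a b) :
    FreeAlgebra.lift DahaR (repGen y) a = FreeAlgebra.lift DahaR (repGen y) b := by
  have smulEq : ∀ (r : DahaR) (e : Module.End k (RepSpace k)),
      algebraMap DahaR k r • e = r • e := fun r e => algebraMap_smul k r e
  induction h with
  | X_Xinv => simp [repGen, repX_mul_repX, repX_zero]
  | Xinv_X => simp [repGen, repX_mul_repX, repX_zero]
  | Y_Yinv => simp [repGen]
  | Yinv_Y => simp [repGen]
  | hecke =>
    rw [map_mul, map_sub, map_add, FreeAlgebra.lift_ι_apply, AlgHom.commutes, AlgHom.commutes,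
      map_zero]
    change (repT (repC k) - algebraMap _ _ _) * (repT (repC k) + algebraMap _ _ _) = 0
    refine (hecke_iff dahaTau_mul_inv).2 ?_
    rw [repT_mul_repT]
    exact congrArg (· + 1) (smulEq dahaC (repT (repC k)))
  | TXT =>
    simp only [map_mul, FreeAlgebra.lift_ι_apply]
    exact repT_repX_repT (repC k)
  | TYinvT =>
    simp only [map_mul, FreeAlgebra.lift_ι_apply]
    exact repT_repYinv_repT (repC k) (repQ k) y
  | cross =>
    simp only [map_mul, FreeAlgebra.lift_ι_apply, AlgHom.commutes]
    rw [Algebra.algebraMap_eq_smul_one, ← smulEq]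
    exact rep_cross (repC k) (repQ k) y

/-- The representation of `H^{ell}` on pairs of Laurent polynomials over `k`. -/
noncomputable def rep : Daha →ₐ[DahaR] Module.End k (RepSpace k) :=
  RingQuot.liftAlgHom DahaR ⟨FreeAlgebra.lift DahaR (repGen y), repGen_rel y⟩

lemma rep_gen (i : Fin 5) :
    rep y (RingQuot.mkAlgHom DahaR DahaRel (ι DahaR i)) = repGen y i := by
  rw [rep, RingQuot.liftAlgHom_mkAlgHom_apply, FreeAlgebra.lift_ι_apply]

lemma rep_Xu_zpow (i : ℤ) : rep y ↑(Xu ^ i) = repX i := by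
  induction i using Int.induction_on with
  | zero => simp [repX_zero]
  | succ i ih =>
    rw [zpow_add_one, Units.val_mul, map_mul, ih, ← repX_mul_repX]
    exact congrArg _ (rep_gen y 0)
  | pred i ih =>
    rw [zpow_sub_one, Units.val_mul, map_mul, ih, sub_eq_add_neg, ← repX_mul_repX]
    exact congrArg _ (rep_gen y 1)

lemma rep_Yu_zpow (j : ℤ) :
    rep y ↑(Yu ^ j) = ↑(repY (repC k) (repQ k) y ^ j) := by
  have h : Units.map (rep y).toMonoidHom Yu = repY (repC k) (repQ k) y := Units.ext (rep_gen y 2)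
  rw [← h, ← map_zpow]; rfl

/-- The vector `(1, 0)` separates the monomials: `X^i T^ε Y^j` sends it to `x^i y^j` placed in the
component `ε`. -/
lemma rep_monomial (p : ℤ × Bool × ℤ) : rep y (pbwMonomial Xu Yu T p) (1, 0) =
    if p.2.1 then ((0, AddMonoidAlgebra.single p.1 ↑(y ^ p.2.2)) : RepSpace k)
    else (AddMonoidAlgebra.single p.1 ↑(y ^ p.2.2), 0) := by
  obtain ⟨i, e, j⟩ := p
  have hT : rep y T = repT (repC k) := rep_gen y 4
  rw [pbwMonomial, map_mul, map_mul, rep_Xu_zpow, rep_Yu_zpow, Module.End.mul_apply,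
    repY_zpow_const]
  have h (a : k) : LaurentPolynomial.T i * LaurentPolynomial.C a =
      AddMonoidAlgebra.single i a := by
    rw [LaurentPolynomial.T_mul, ← LaurentPolynomial.single_eq_C_mul_T]
  cases e
  · simp [-LaurentPolynomial.T_mul, repX_apply, h]
  · simp [-LaurentPolynomial.T_mul, hT, repT_const, repX_apply, h]

/-- Given functionals `φ j` on `k`, the functional taking `φ j` of the coefficient of `x^i` in the
component `ε`. -/
noncomputable def coeffFunctional (φ : ℤ → Module.Dual DahaR k) (p : ℤ × Bool × ℤ) :
    Module.Dual DahaR (RepSpace k) where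
  toFun v := φ p.2.2 ((if p.2.1 then v.2 else v.1).coeff p.1)
  map_add' v w := by split_ifs <;> simp
  map_smul' r v := by split_ifs <;> simp

lemma linearIndependent_of_dual (φ : ℤ → Module.Dual DahaR k)
    (h1 : ∀ j, φ j ↑(y ^ j) = 1) (h0 : ∀ j j', j ≠ j' → φ j ↑(y ^ j') = 0) :
    LinearIndependent DahaR (pbwMonomial Xu Yu T) := by
  let ev : Daha →ₗ[DahaR] RepSpace k :=
    { toFun := fun a => rep y a (1, 0)
      map_add' := fun a b => by rw [map_add, LinearMap.add_apply]
      map_smul' := fun r a => by rw [map_smul, LinearMap.smul_apply, RingHom.id_apply] }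
  refine LinearIndependent.of_comp ev ?_
  refine LinearIndependent.of_pairwise_dual_eq_zero_one _ (coeffFunctional φ) ?_ ?_
  · rintro ⟨i, e, j⟩ ⟨i', e', j'⟩ hne
    change coeffFunctional φ _ (rep y _ _) = 0
    rw [rep_monomial]
    by_cases hi : i' = i
    · subst hi
      cases e <;> cases e' <;>
        simp_all [-LaurentPolynomial.single_eq_C_mul_T, coeffFunctional]
    · cases e <;> cases e' <;>
        simp [-LaurentPolynomial.single_eq_C_mul_T, coeffFunctional, hi]
  · rintro ⟨i, e, j⟩
    change coeffFunctional φ _ (rep y _ _) = 1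
    rw [rep_monomial]
    cases e <;> simp [-LaurentPolynomial.single_eq_C_mul_T, coeffFunctional, h1]

end Rep

lemma linearIndependent_monomial : LinearIndependent DahaR (pbwMonomial Xu Yu T) := by
  -- `k = R[y, y⁻¹]`, with the coefficient functionals dual to the powers of `y`.
  refine linearIndependent_of_dual (k := LaurentPolynomial DahaR) laurentX
    (fun j => { toFun := fun f => f.coeff j, map_add' := fun _ _ => rfl,
                map_smul' := fun _ _ => rfl }) (fun j => ?_) (fun j j' h => ?_)
  · change ((laurentX ^ j : (LaurentPolynomial DahaR)ˣ) : LaurentPolynomial DahaR).coeff j = 1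
    rw [laurentX_zpow, LaurentPolynomial.T, AddMonoidAlgebra.coeff_single, Finsupp.single_eq_same]
  · change ((laurentX ^ j' : (LaurentPolynomial DahaR)ˣ) : LaurentPolynomial DahaR).coeff j = 0
    rw [laurentX_zpow, LaurentPolynomial.T, AddMonoidAlgebra.coeff_single,
      Finsupp.single_eq_of_ne h]

end Daha

/-- Triangular decomposition (PBW theorem) for the double affine Hecke algebra of
type `A₁`: the monomials `X^i T^ε Y^j` (`i, j ∈ ℤ`, `ε ∈ {0,1}`) form an `R`-basis
of `H^{ell}`, i.e. `H^{ell} = ℂ[X^{±1}] ⊗ H ⊗ ℂ[Y^{±1}]`. -/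
theorem daha_pbw :
    LinearIndependent DahaR
      (fun p : ℤ × Bool × ℤ =>
        Daha.Xpow p.1 * (if p.2.1 then Daha.T else 1) * Daha.Ypow p.2.2) ∧
    Submodule.span DahaR
        (Set.range fun p : ℤ × Bool × ℤ =>
          Daha.Xpow p.1 * (if p.2.1 then Daha.T else 1) * Daha.Ypow p.2.2) = ⊤ := by
  rw [Daha.monomial_eq]
  exact ⟨Daha.linearIndependent_monomial, Daha.pbwSpan_eq_top⟩
end
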